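/- (Identity (4.1), stated with q replaced by q^2 to avoid half-integer powers.) Let q be a complex number with 0 < |q| < 1 and let k ≥ 2 be an integer. Then ∑_{s_1 ≥ s_2 ≥ ⋯ ≥ s_{k-1} ≥ 0} q^{2(s_1^2 + ⋯ + s_{k-1}^2)} / [(q^2;q^2)_{s_1-s_2} ⋯ (q^2;q^2)_{s_{k-2}-s_{k-1}} (q;q)_{2 s_{k-1}}] = (q^{4k}, -q^{2k-1}, -q^{2k+1}; q^{4k})_∞ / (q^2;q^2)_∞. -/

import Mathlib

/-- The finite q-Pochhammer symbol `(x;q)_n = ∏_{j=0}^{n-1} (1 - x q^j)`. -/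
noncomputable def qPoch (x q : ℂ) (n : ℕ) : ℂ := ∏ j ∈ Finset.range n, (1 - x * q ^ j)

/-- The infinite q-Pochhammer symbol `(x;q)_∞ = ∏_{j=0}^{∞} (1 - x q^j)`. -/
noncomputable def qPochInf (x q : ℂ) : ℂ := ∏' j : ℕ, (1 - x * q ^ j)

/-!
In base `Q = q²`, the sequences `α_r = q^{2r² - r}` and `β_L = 1 / (q;q)_{2L}` form a Bailey pair
relative to `1`. Each of `k - 1` applications of the Bailey lemma multiplies `α_r` by `Q^{r²}` and
sums over one more index on the `β`-side; the lemma itself is the `q`-Vandermonde sum. As `L → ∞`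
the multisum becomes `∑_r q^{2kr² - r} / (q²;q²)_∞`, and Jacobi's triple product evaluates this
theta series. The finite identities (`q`-Vandermonde, the initial pair, the finite form of the
triple product) are telescoping sums over `ℤ`.
-/

open Filter Topology Finset

/-- The reciprocal `1 / (Q;Q)_n`, extended by zero to the negative integers; with this convention
the sums over `ℤ` below are finite without explicit bounds on the index. -/
noncomputable def invQPoch (Q : ℂ) (n : ℤ) : ℂ := if n < 0 then 0 else (qPoch Q Q n.toNat)⁻¹

section invQPoch

variable {Q : ℂ}

@[simp]
lemma invQPoch_natCast (Q : ℂ) (n : ℕ) : invQPoch Q n = (qPoch Q Q n)⁻¹ := by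
  simp [invQPoch]

lemma invQPoch_of_neg (Q : ℂ) {n : ℤ} (hn : n < 0) : invQPoch Q n = 0 :=
  if_pos hn

lemma invQPoch_mul_invQPoch_of_neg (Q : ℂ) {m n : ℤ} (h : m < 0 ∨ n < 0) :
    invQPoch Q m * invQPoch Q n = 0 := by
  rcases h with hm | hn
  · rw [invQPoch_of_neg Q hm, zero_mul]
  · rw [invQPoch_of_neg Q hn, mul_zero]

@[simp]
lemma invQPoch_zero (Q : ℂ) : invQPoch Q 0 = 1 := by
  simp [invQPoch, qPoch]

lemma one_sub_pow_ne_zero (hQ : ¬IsOfFinOrder Q) {n : ℕ} (hn : n ≠ 0) : 1 - Q ^ n ≠ 0 :=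
  fun h ↦ hQ <| isOfFinOrder_iff_pow_eq_one.mpr ⟨n, hn.bot_lt, (sub_eq_zero.mp h).symm⟩

lemma not_isOfFinOrder_of_norm_lt_one (hQ : ‖Q‖ < 1) : ¬IsOfFinOrder Q :=
  fun h ↦ hQ.ne h.norm_eq_one

lemma qPoch_self_ne_zero (hQ : ¬IsOfFinOrder Q) (n : ℕ) : qPoch Q Q n ≠ 0 :=
  prod_ne_zero_iff.mpr fun j _ ↦ by
    simpa only [pow_succ'] using one_sub_pow_ne_zero hQ j.succ_ne_zero

lemma qPoch_succ (x q : ℂ) (n : ℕ) : qPoch x q (n + 1) = qPoch x q n * (1 - x * q ^ n) :=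
  prod_range_succ ..

lemma qPoch_self_succ (Q : ℂ) (n : ℕ) : qPoch Q Q (n + 1) = qPoch Q Q n * (1 - Q ^ (n + 1)) := by
  rw [qPoch_succ, pow_succ']

lemma one_sub_zpow_mul_invQPoch (hQ : ¬IsOfFinOrder Q) (n : ℤ) :
    (1 - Q ^ n) * invQPoch Q n = invQPoch Q (n - 1) := by
  rcases lt_trichotomy n 0 with hn | rfl | hn
  · rw [invQPoch_of_neg Q hn, invQPoch_of_neg Q (by omega), mul_zero]
  · simp [invQPoch_of_neg]
  · obtain ⟨m, rfl⟩ : ∃ m : ℕ, n = (m + 1 : ℕ) := ⟨(n - 1).toNat, by omega⟩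
    have := one_sub_pow_ne_zero hQ m.succ_ne_zero
    have := qPoch_self_ne_zero hQ m
    rw [invQPoch_natCast, qPoch_self_succ, Nat.cast_succ, add_sub_cancel_right, invQPoch_natCast,
      ← Nat.cast_succ, zpow_natCast]
    field_simp

lemma summable_mul_invQPoch_mul_invQPoch (Q : ℂ) (c : ℤ → ℂ) (a b : ℤ) :
    Summable fun r : ℤ ↦ c r * (invQPoch Q (a - r) * invQPoch Q (b + r)) :=
  summable_of_ne_finset_zero (s := Icc (-b) a) fun r hr ↦ by
    rw [mem_Icc] at hr
    rw [invQPoch_mul_invQPoch_of_neg Q (by omega), mul_zero]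

end invQPoch

section Telescoping

lemma tsum_eq_tsum_of_sub_eq_sub_shift {E : Type*} [AddCommGroup E] [TopologicalSpace E]
    [IsTopologicalAddGroup E] [T2Space E] {f g G : ℤ → E} (hf : Summable f) (hg : Summable g)
    (hG : Summable G) (h : ∀ r, f r - g r = G (r + 1) - G r) : ∑' r, f r = ∑' r, g r := by
  have hG' : Summable fun r ↦ G (r + 1) := (Equiv.addRight (1 : ℤ)).summable_iff.mpr hG
  have hshift : ∑' r, G (r + 1) = ∑' r, G r := (Equiv.addRight (1 : ℤ)).tsum_eq G
  rw [← sub_eq_zero, ← hf.tsum_sub hg, tsum_congr h, hG'.tsum_sub hG, hshift, sub_self]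

variable {Q : ℂ}

lemma one_sub_zpow_mul_tsum_qVandermonde (hQ₀ : Q ≠ 0) (hQ : ¬IsOfFinOrder Q) (n c : ℤ) :
    (1 - Q ^ n) * ∑' m : ℤ, Q ^ (m * (m + c)) * invQPoch Q (m + c) *
        (invQPoch Q (n - m) * invQPoch Q m) =
      ∑' m : ℤ, Q ^ (m * (m + (c + 1))) * invQPoch Q (m + (c + 1)) *
        (invQPoch Q (n - 1 - m) * invQPoch Q m) := by
  rw [← tsum_mul_left]
  symm
  refine tsum_eq_tsum_of_sub_eq_sub_shift
    (G := fun m ↦ Q ^ (m * (m + c)) * invQPoch Q (m + c) *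
      (invQPoch Q (n - m) * invQPoch Q (-1 + m))) ?_ (Summable.mul_left _ ?_)
    (summable_mul_invQPoch_mul_invQPoch ..) fun m ↦ ?_
  · simpa only [zero_add] using summable_mul_invQPoch_mul_invQPoch Q _ (n - 1) 0
  · simpa only [zero_add] using summable_mul_invQPoch_mul_invQPoch Q _ n 0
  have hn : invQPoch Q (n - 1 - m) = (1 - Q ^ (n - m)) * invQPoch Q (n - m) := by
    rw [one_sub_zpow_mul_invQPoch hQ, sub_right_comm]
  have hm : invQPoch Q (-1 + m) = (1 - Q ^ m) * invQPoch Q m := by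
    rw [one_sub_zpow_mul_invQPoch hQ, neg_add_eq_sub]
  have hc : invQPoch Q (m + c) = (1 - Q ^ (m + c + 1)) * invQPoch Q (m + c + 1) := by
    rw [one_sub_zpow_mul_invQPoch hQ, add_sub_cancel_right]
  rw [show n - (m + 1) = n - 1 - m by ring, show -1 + (m + 1) = m by ring,
    show m + 1 + c = m + c + 1 by ring, show m + (c + 1) = m + c + 1 by ring, hm, hc, hn,
    show (m + 1) * (m + c + 1) = m * (m + c) + m + (m + c + 1) by ring,
    show m * (m + c + 1) = m * (m + c) + m by ring, zpow_add₀ hQ₀ (m * (m + c) + m),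
    zpow_add₀ hQ₀ (m * (m + c)), show Q ^ n = Q ^ (n - m) * Q ^ m by
      rw [← zpow_add₀ hQ₀, sub_add_cancel]]
  ring

theorem tsum_qVandermonde (hQ₀ : Q ≠ 0) (hQ : ¬IsOfFinOrder Q) (n c : ℤ) :
    ∑' m : ℤ, Q ^ (m * (m + c)) * invQPoch Q (m + c) * (invQPoch Q (n - m) * invQPoch Q m) =
      invQPoch Q n * invQPoch Q (n + c) := by
  rcases lt_or_ge n 0 with hn | hn
  · rw [invQPoch_of_neg Q hn, zero_mul]
    refine (tsum_congr fun m ↦ ?_).trans tsum_zero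
    rw [invQPoch_mul_invQPoch_of_neg Q (by omega), mul_zero]
  lift n to ℕ using hn
  induction n generalizing c with
  | zero =>
    rw [tsum_eq_single 0 fun m hm ↦ by rw [invQPoch_mul_invQPoch_of_neg Q (by omega), mul_zero]]
    simp
  | succ n ih =>
    have hne : 1 - Q ^ ((n + 1 : ℕ) : ℤ) ≠ 0 := by
      simpa only [zpow_natCast] using one_sub_pow_ne_zero hQ n.succ_ne_zero
    apply mul_left_cancel₀ hne
    rw [one_sub_zpow_mul_tsum_qVandermonde hQ₀ hQ, ← mul_assoc, one_sub_zpow_mul_invQPoch hQ,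
      Nat.cast_succ, add_sub_cancel_right, ih, add_right_comm, ← add_assoc]

end Telescoping

/-- `(α, β)` is a Bailey pair relative to `a = 1` in base `Q`, written bilaterally: the usual
unilateral sequence has `α 0` as its zeroth term and `α r + α (-r)` as its `r`-th term, `r ≥ 1`. -/
def IsBaileyPair (Q : ℂ) (α : ℤ → ℂ) (β : ℕ → ℂ) : Prop :=
  ∀ L : ℕ, β L = ∑' r : ℤ, α r * (invQPoch Q (L - r) * invQPoch Q (L + r))

/-- The action of the Bailey lemma on the `β`-side of a Bailey pair. -/
noncomputable def baileyStep (Q : ℂ) (β : ℕ → ℂ) (L : ℕ) : ℂ :=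
  ∑' s : ℕ, invQPoch Q (L - s) * (Q ^ (s ^ 2) * β s)

section BaileyPair

variable {Q : ℂ} {α : ℤ → ℂ} {β : ℕ → ℂ}

/- Creative telescoping: the sum over `r` inherits `h_rec` because the defect of its summand is the
increment in `r` of `c L r / ((Q;Q)_{L+1-r} (Q;Q)_{L+r})`; `hc` says this with the `q`-factorials
cancelled. -/
theorem isBaileyPair_of_certificate (hQ : ¬IsOfFinOrder Q) (a b : ℕ → ℂ) (c : ℕ → ℤ → ℂ)
    (h_zero : β 0 = α 0) (ha : ∀ L, a L ≠ 0) (h_rec : ∀ L, a L * β (L + 1) = b L * β L)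
    (hc : ∀ (L : ℕ) (r : ℤ),
      a L * α r - b L * α r * ((1 - Q ^ (L + 1 - r)) * (1 - Q ^ (L + 1 + r))) =
        c L (r + 1) * (1 - Q ^ (L + 1 - r)) - c L r * (1 - Q ^ (L + 1 + r))) :
    IsBaileyPair Q α β := by
  intro L
  induction L with
  | zero =>
    rw [tsum_eq_single 0 fun r hr ↦ by rw [invQPoch_mul_invQPoch_of_neg Q (by omega), mul_zero]]
    simp [h_zero]
  | succ L ih =>
    apply mul_left_cancel₀ (ha L)
    rw [h_rec, ih, ← tsum_mul_left, ← tsum_mul_left]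
    symm
    refine tsum_eq_tsum_of_sub_eq_sub_shift
      (G := fun r ↦ c L r * (invQPoch Q ((L + 1 : ℤ) - r) * invQPoch Q (L + r)))
      ((summable_mul_invQPoch_mul_invQPoch ..).mul_left _)
      ((summable_mul_invQPoch_mul_invQPoch ..).mul_left _)
      (summable_mul_invQPoch_mul_invQPoch ..) fun r ↦ ?_
    have h_sub : invQPoch Q (L - r) = (1 - Q ^ (L + 1 - r)) * invQPoch Q (L + 1 - r) := by
      rw [one_sub_zpow_mul_invQPoch hQ]; ring_nf
    have h_add : invQPoch Q (L + r) = (1 - Q ^ (L + 1 + r)) * invQPoch Q (L + 1 + r) := by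
      rw [one_sub_zpow_mul_invQPoch hQ]; ring_nf
    rw [show (L + 1 - (r + 1) : ℤ) = L - r by ring, show (L + (r + 1) : ℤ) = L + 1 + r by ring,
      h_sub, h_add, Nat.cast_succ]
    linear_combination invQPoch Q (L + 1 - r) * invQPoch Q (L + 1 + r) * hc L r

/- Paule's creative symmetrizing: the initial pair admits a first-order certificate only after
averaging over `r ↦ -r`. -/
lemma IsBaileyPair.of_symmetrization
    (h : IsBaileyPair Q (fun r ↦ α r + α (-r)) (fun L ↦ 2 * β L)) : IsBaileyPair Q α β := by
  intro L
  have h_reflect : ∑' r : ℤ, α (-r) * (invQPoch Q (L - r) * invQPoch Q (L + r)) =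
      ∑' r : ℤ, α r * (invQPoch Q (L - r) * invQPoch Q (L + r)) := by
    rw [← (Equiv.neg ℤ).tsum_eq]
    refine tsum_congr fun r ↦ ?_
    rw [Equiv.neg_apply, neg_neg, sub_neg_eq_add, ← sub_eq_add_neg, mul_comm (invQPoch Q (L + r))]
  apply mul_left_cancel₀ (two_ne_zero (α := ℂ))
  refine (h L).trans ?_
  simp only [add_mul]
  rw [Summable.tsum_add (summable_mul_invQPoch_mul_invQPoch ..)
    (summable_mul_invQPoch_mul_invQPoch ..), h_reflect, two_mul]

lemma tsum_natCast_eq_tsum_int {E : Type*} [AddCommMonoid E] [TopologicalSpace E] {f : ℤ → E}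
    (hf : ∀ n < 0, f n = 0) : ∑' n : ℕ, f n = ∑' n : ℤ, f n :=
  Nat.cast_injective.tsum_eq fun n hn ↦
    ⟨n.toNat, Int.toNat_of_nonneg (not_lt.mp (mt (hf n) hn))⟩

lemma tsum_pow_sq_mul_invQPoch (hQ₀ : Q ≠ 0) (hQ : ¬IsOfFinOrder Q) (L r : ℤ) :
    ∑' s : ℕ, Q ^ (s ^ 2) * (invQPoch Q (L - s) * (invQPoch Q (s - r) * invQPoch Q (s + r))) =
      Q ^ (r ^ 2) * (invQPoch Q (L - r) * invQPoch Q (L + r)) := by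
  have h_int := tsum_natCast_eq_tsum_int (f := fun s : ℤ ↦ Q ^ (s ^ 2) *
      (invQPoch Q (L - s) * (invQPoch Q (s - r) * invQPoch Q (s + r)))) fun s hs ↦ by
    rw [invQPoch_mul_invQPoch_of_neg Q (m := s - r) (by omega), mul_zero, mul_zero]
  norm_cast at h_int
  rw [h_int, ← (Equiv.addRight r).tsum_eq, show L + r = L - r + 2 * r by ring,
    ← tsum_qVandermonde hQ₀ hQ, ← tsum_mul_left]
  refine tsum_congr fun m ↦ ?_
  rw [Equiv.coe_addRight, show L - (m + r) = L - r - m by ring, add_sub_cancel_right,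
    show m + r + r = m + 2 * r by ring, show (m + r) ^ 2 = r ^ 2 + m * (m + 2 * r) by ring,
    zpow_add₀ hQ₀]
  ring

theorem IsBaileyPair.step (hQ₀ : Q ≠ 0) (hQ : ¬IsOfFinOrder Q) (h : IsBaileyPair Q α β) :
    IsBaileyPair Q (fun r ↦ Q ^ (r ^ 2) * α r) (baileyStep Q β) := by
  intro L
  have h_summable : Summable (Function.uncurry fun (s : ℕ) (r : ℤ) ↦ α r * (Q ^ (s ^ 2) *
      (invQPoch Q (L - s) * (invQPoch Q (s - r) * invQPoch Q (s + r))))) := by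
    refine summable_of_ne_finset_zero (s := range (L + 1) ×ˢ Icc (-L : ℤ) L) fun ⟨s, r⟩ hsr ↦ ?_
    rw [mem_product, mem_range, mem_Icc] at hsr
    dsimp only [Function.uncurry_apply_pair] at hsr ⊢
    rcases le_or_gt s L with hs | hs
    · rw [invQPoch_mul_invQPoch_of_neg Q (m := s - r) (by omega), mul_zero, mul_zero, mul_zero]
    · rw [invQPoch_of_neg Q (n := L - s) (by omega), zero_mul, mul_zero, mul_zero]
  calc
    baileyStep Q β L = ∑' (s : ℕ) (r : ℤ), α r * (Q ^ (s ^ 2) *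
        (invQPoch Q (L - s) * (invQPoch Q (s - r) * invQPoch Q (s + r)))) := by
      refine tsum_congr fun s ↦ ?_
      rw [h s, ← tsum_mul_left, ← tsum_mul_left]
      exact tsum_congr fun r ↦ by ring
    _ = ∑' (r : ℤ) (s : ℕ), α r * (Q ^ (s ^ 2) *
        (invQPoch Q (L - s) * (invQPoch Q (s - r) * invQPoch Q (s + r)))) :=
      h_summable.tsum_comm.symm
    _ = ∑' r : ℤ, Q ^ (r ^ 2) * α r * (invQPoch Q (L - r) * invQPoch Q (L + r)) := by
      refine tsum_congr fun r ↦ ?_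
      rw [tsum_mul_left, tsum_pow_sq_mul_invQPoch hQ₀ hQ]
      ring

end BaileyPair

section ExplicitPairs

theorem isBaileyPair_finite_jacobi {p w : ℂ} (hp₀ : p ≠ 0) (hp : ¬IsOfFinOrder p) (hw : w ≠ 0) :
    IsBaileyPair (p ^ 2) (fun r ↦ p ^ (r ^ 2) * w ^ r) (fun L ↦
      qPoch (-(p * w)) (p ^ 2) L * qPoch (-(p * w⁻¹)) (p ^ 2) L *
        (qPoch (p ^ 2) (p ^ 2) (2 * L))⁻¹) := by
  have hpQ : ¬IsOfFinOrder (p ^ 2) := fun h ↦ hp (h.of_pow two_ne_zero)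
  -- The certificate is sought as `α r` times an affine function of `(p ^ 2) ^ (-r)`, whose
  -- coefficients are found by comparing powers of `p ^ r`.
  refine isBaileyPair_of_certificate hpQ
    (fun L ↦ (1 - (p ^ 2) ^ (2 * L + 1)) * (1 - (p ^ 2) ^ (2 * L + 2)))
    (fun L ↦ (1 + p * w * (p ^ 2) ^ L) * (1 + p * w⁻¹ * (p ^ 2) ^ L))
    (fun L r ↦ p ^ (r ^ 2) * w ^ r *
      (p * w⁻¹ * (p ^ 2) ^ L * (1 + p * w * (p ^ 2) ^ L) -
        (p ^ 2) ^ (L + 1 - r) * (1 + p * w⁻¹ * (p ^ 2) ^ L)))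
    (by simp [qPoch]) (fun L ↦ mul_ne_zero (one_sub_pow_ne_zero hpQ (by omega))
      (one_sub_pow_ne_zero hpQ (by omega))) (fun L ↦ ?_) (fun L r ↦ ?_)
  · have h₁ := one_sub_pow_ne_zero hpQ (n := 2 * L + 1) (by omega)
    have h₂ := one_sub_pow_ne_zero hpQ (n := 2 * L + 2) (by omega)
    have h := qPoch_self_ne_zero hpQ (2 * L)
    simp only [mul_add_one, qPoch_self_succ (p ^ 2), qPoch_succ _ _ L]
    field_simp
    ring
  · have hp2 (n : ℤ) : (p ^ 2) ^ n = (p ^ n) ^ 2 :=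
      mod_cast zpow_comm p 2 n
    simp only [hp2, show (r + 1) ^ 2 = r ^ 2 + r + r + 1 by ring, zpow_add₀ hp₀, zpow_sub₀ hp₀,
      zpow_add₀ hw, zpow_one, zpow_natCast]
    have := zpow_ne_zero r hp₀
    field_simp
    ring

theorem isBaileyPair_zpow_sq_mul_inv_zpow {q : ℂ} (hq₀ : q ≠ 0) (hq : ¬IsOfFinOrder q) :
    IsBaileyPair (q ^ 2) (fun r ↦ (q ^ 2) ^ (r ^ 2) * q⁻¹ ^ r) (fun L ↦ (qPoch q q (2 * L))⁻¹) := by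
  have hqQ : ¬IsOfFinOrder (q ^ 2) := fun h ↦ hq (h.of_pow two_ne_zero)
  refine .of_symmetrization <| isBaileyPair_of_certificate hqQ
    (fun L ↦ (1 - q ^ (2 * L + 1)) * (1 - q ^ (2 * L + 2))) 1
    (fun L r ↦ (q ^ 2) ^ (r ^ 2) * q⁻¹ ^ r * (q ^ (2 * L + 1) - (q ^ 2) ^ (L + 1 - r)))
    (by simp [qPoch, one_add_one_eq_two]) (fun L ↦ mul_ne_zero (one_sub_pow_ne_zero hq (by omega))
      (one_sub_pow_ne_zero hq (by omega))) (fun L ↦ ?_) (fun L r ↦ ?_)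
  · have h₁ := one_sub_pow_ne_zero hq (n := 2 * L + 1) (by omega)
    have h₂ := one_sub_pow_ne_zero hq (n := 2 * L + 2) (by omega)
    have h := qPoch_self_ne_zero hq (2 * L)
    simp only [mul_add_one, qPoch_self_succ, Pi.one_apply]
    field_simp
  · have hq2 (n : ℤ) : (q ^ 2) ^ n = (q ^ n) ^ 2 :=
      mod_cast zpow_comm q 2 n
    simp only [hq2, show (r + 1) ^ 2 = r ^ 2 + r + r + 1 by ring, neg_sq, zpow_add₀ hq₀,
      zpow_sub₀ hq₀, zpow_neg, inv_zpow, zpow_one, zpow_natCast, Pi.one_apply]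
    have := zpow_ne_zero r hq₀
    field_simp
    ring

end ExplicitPairs

section Asymptotics

variable {Q : ℂ} {α : ℤ → ℂ} {β : ℕ → ℂ}

lemma summable_norm_neg_mul_pow (hQ : ‖Q‖ < 1) (x : ℂ) : Summable fun j : ℕ ↦ ‖-(x * Q ^ j)‖ := by
  simpa only [norm_neg, norm_mul, norm_pow] using
    (summable_geometric_of_lt_one (norm_nonneg _) hQ).mul_left ‖x‖

lemma tendsto_qPoch (hQ : ‖Q‖ < 1) (x : ℂ) :
    Tendsto (qPoch x Q) atTop (𝓝 (qPochInf x Q)) := by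
  simpa only [← sub_eq_add_neg] using!
    (multipliable_one_add_of_summable (summable_norm_neg_mul_pow hQ x)).tendsto_prod_tprod_nat

lemma qPochInf_self_ne_zero (hQ : ‖Q‖ < 1) : qPochInf Q Q ≠ 0 := by
  have h := tprod_one_add_ne_zero_of_summable (f := fun j : ℕ ↦ -(Q * Q ^ j)) (fun j ↦ ?_)
    (summable_norm_neg_mul_pow hQ Q)
  · simpa only [← sub_eq_add_neg] using! h
  · rw [← sub_eq_add_neg, ← pow_succ']
    exact one_sub_pow_ne_zero (not_isOfFinOrder_of_norm_lt_one hQ) j.succ_ne_zero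

lemma tendsto_invQPoch (hQ : ‖Q‖ < 1) :
    Tendsto (invQPoch Q) atTop (𝓝 (qPochInf Q Q)⁻¹) := by
  have h := (tendsto_qPoch hQ Q).inv₀ (qPochInf_self_ne_zero hQ)
  rw [← Nat.map_cast_int_atTop, tendsto_map'_iff]
  exact h.congr fun n ↦ (invQPoch_natCast Q n).symm

lemma exists_norm_invQPoch_le (hQ : ‖Q‖ < 1) : ∃ C, ∀ n, ‖invQPoch Q n‖ ≤ C := by
  have h_nat := (tendsto_invQPoch hQ).comp tendsto_natCast_atTop_atTop
  obtain ⟨C, hC⟩ := (Metric.isBounded_range_of_tendsto _ h_nat).exists_norm_le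
  refine ⟨C, fun n ↦ ?_⟩
  rcases lt_or_ge n 0 with hn | hn
  · rw [invQPoch_of_neg Q hn, norm_zero]
    exact (norm_nonneg _).trans (hC _ ⟨0, rfl⟩)
  · lift n to ℕ using hn
    exact hC _ ⟨n, rfl⟩

lemma tendsto_invQPoch_natCast_add (hQ : ‖Q‖ < 1) (r : ℤ) :
    Tendsto (fun L : ℕ ↦ invQPoch Q (L + r)) atTop (𝓝 (qPochInf Q Q)⁻¹) :=
  (tendsto_invQPoch hQ).comp (tendsto_atTop_add_const_right _ r tendsto_natCast_atTop_atTop)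

lemma tendsto_invQPoch_natCast_sub (hQ : ‖Q‖ < 1) (r : ℤ) :
    Tendsto (fun L : ℕ ↦ invQPoch Q (L - r)) atTop (𝓝 (qPochInf Q Q)⁻¹) := by
  simpa only [sub_eq_add_neg] using tendsto_invQPoch_natCast_add hQ (-r)

theorem IsBaileyPair.tendsto (hQ : ‖Q‖ < 1) (h : IsBaileyPair Q α β) (hα : Summable α) :
    Tendsto β atTop (𝓝 ((∑' r, α r) * ((qPochInf Q Q)⁻¹ * (qPochInf Q Q)⁻¹))) := by
  obtain ⟨C, hC⟩ := exists_norm_invQPoch_le hQ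
  have hC₀ : 0 ≤ C := (norm_nonneg _).trans (hC 0)
  rw [funext h, ← tsum_mul_right]
  refine tendsto_tsum_of_dominated_convergence (bound := fun r ↦ ‖α r‖ * (C * C))
    (hα.norm.mul_right _) (fun r ↦ ?_) (.of_forall fun L r ↦ ?_)
  · exact ((tendsto_invQPoch_natCast_sub hQ r).mul
      (tendsto_invQPoch_natCast_add hQ r)).const_mul _
  · rw [norm_mul, norm_mul]
    gcongr <;> apply hC

lemma IsBaileyPair.exists_norm_le (hQ : ‖Q‖ < 1) (h : IsBaileyPair Q α β) (hα : Summable α) :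
    ∃ C, ∀ L, ‖β L‖ ≤ C := by
  obtain ⟨C, hC⟩ := (Metric.isBounded_range_of_tendsto _ (h.tendsto hQ hα)).exists_norm_le
  exact ⟨C, fun L ↦ hC _ ⟨L, rfl⟩⟩

lemma summable_pow_sq {x : ℝ} (hx₀ : 0 ≤ x) (hx : x < 1) : Summable fun s : ℕ ↦ x ^ (s ^ 2) :=
  (summable_geometric_of_lt_one hx₀ hx).of_nonneg_of_le (fun _ ↦ pow_nonneg hx₀ _)
    fun s ↦ pow_le_pow_of_le_one hx₀ hx.le (Nat.le_self_pow two_ne_zero s)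

lemma summable_zpow_sq_mul (hQ : ‖Q‖ < 1) (hα : Summable α) :
    Summable fun r ↦ Q ^ (r ^ 2) * α r := by
  refine hα.norm.of_norm_bounded fun r ↦ ?_
  rw [norm_mul, norm_zpow, ← Int.natAbs_sq, ← Nat.cast_pow, zpow_natCast]
  exact mul_le_of_le_one_left (norm_nonneg _) (pow_le_one₀ (norm_nonneg _) hQ.le)

theorem IsBaileyPair.tsum_pow_sq_mul (hQ₀ : Q ≠ 0) (hQ : ‖Q‖ < 1) (h : IsBaileyPair Q α β)
    (hα : Summable α) :
    ∑' s : ℕ, Q ^ (s ^ 2) * β s = (∑' r : ℤ, Q ^ (r ^ 2) * α r) / qPochInf Q Q := by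
  obtain ⟨C, hC⟩ := exists_norm_invQPoch_le hQ
  obtain ⟨D, hD⟩ := h.exists_norm_le hQ hα
  have hC₀ : 0 ≤ C := (norm_nonneg _).trans (hC 0)
  have h_lhs : Tendsto (baileyStep Q β) atTop
      (𝓝 (∑' s : ℕ, (qPochInf Q Q)⁻¹ * (Q ^ (s ^ 2) * β s))) := by
    refine tendsto_tsum_of_dominated_convergence
      (bound := fun s ↦ C * (‖Q‖ ^ (s ^ 2) * D)) (((summable_pow_sq (norm_nonneg Q) hQ).mul_right
        _).mul_left _) (fun s ↦ ?_) (.of_forall fun L s ↦ ?_)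
    · exact (tendsto_invQPoch_natCast_sub hQ s).mul_const _
    · rw [norm_mul, norm_mul, norm_pow]
      gcongr
      exacts [hC _, hD s]
  have h_rhs := (h.step hQ₀ (not_isOfFinOrder_of_norm_lt_one hQ)).tendsto hQ
    (summable_zpow_sq_mul hQ hα)
  have h_eq := tendsto_nhds_unique h_lhs h_rhs
  rw [tsum_mul_left, mul_left_comm] at h_eq
  rw [div_eq_mul_inv]
  exact mul_left_cancel₀ (inv_ne_zero (qPochInf_self_ne_zero hQ)) h_eq

end Asymptotics

section JacobiTripleProduct

variable {p w : ℂ}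

lemma summable_zpow_sq_mul_zpow (hp₀ : p ≠ 0) (hp : ‖p‖ < 1) (hw : w ≠ 0) :
    Summable fun r : ℤ ↦ p ^ (r ^ 2) * w ^ r := by
  have h_term (r : ℤ) : jacobiTheta₂_term r (Complex.log w / (2 * Real.pi * Complex.I))
      (Complex.log p / (Real.pi * Complex.I)) = p ^ (r ^ 2) * w ^ r := by
    have hπ := Complex.ofReal_ne_zero.mpr Real.pi_ne_zero
    have hI := Complex.I_ne_zero
    rw [jacobiTheta₂_term, ← Complex.exp_log hp₀, ← Complex.exp_log hw, ← Complex.exp_int_mul,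
      ← Complex.exp_int_mul, ← Complex.exp_add, Complex.exp_log hp₀, Complex.exp_log hw]
    congr 1
    push_cast
    field_simp
    ring
  rw [← funext h_term, summable_jacobiTheta₂_term_iff]
  have h_im : (Complex.log p / (Real.pi * Complex.I)).im = -Real.log ‖p‖ / Real.pi := by
    rw [← div_div, Complex.div_I]
    simp [Complex.log_re, neg_div]
  rw [h_im]
  exact div_pos (neg_pos.mpr (Real.log_neg (norm_pos_iff.mpr hp₀) hp)) Real.pi_pos

theorem jacobi_triple_product (hp₀ : p ≠ 0) (hp : ‖p‖ < 1) (hw : w ≠ 0) :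
    ∑' r : ℤ, p ^ (r ^ 2) * w ^ r =
      qPochInf (p ^ 2) (p ^ 2) * qPochInf (-(p * w)) (p ^ 2) * qPochInf (-(p * w⁻¹)) (p ^ 2) := by
  have hQ : ‖p ^ 2‖ < 1 := by
    simpa only [norm_pow] using pow_lt_one₀ (norm_nonneg p) hp two_ne_zero
  have h_sum := (isBaileyPair_finite_jacobi hp₀ (not_isOfFinOrder_of_norm_lt_one hp) hw).tendsto hQ
    (summable_zpow_sq_mul_zpow hp₀ hp hw)
  have h_even : Tendsto (fun L : ℕ ↦ 2 * L) atTop atTop :=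
    tendsto_id.const_mul_atTop' two_pos
  have hne := qPochInf_self_ne_zero hQ
  have h_prod := ((tendsto_qPoch hQ (-(p * w))).mul (tendsto_qPoch hQ (-(p * w⁻¹)))).mul
    (((tendsto_qPoch hQ (p ^ 2)).inv₀ hne).comp h_even)
  have h_eq := tendsto_nhds_unique h_sum h_prod
  field_simp at h_eq
  rw [h_eq, div_eq_mul_inv]

end JacobiTripleProduct

/-- The summand of the multisum obtained by iterating `baileyStep`, namely
`Q^(s₀² + ⋯ + sₙ²) β(sₙ) / ((Q;Q)_{s₀-s₁} ⋯ (Q;Q)_{sₙ₋₁-sₙ})`; it vanishes unless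
`s₀ ≥ s₁ ≥ ⋯ ≥ sₙ`. -/
noncomputable def baileyChainTerm (Q : ℂ) (β : ℕ → ℂ) {n : ℕ} (s : Fin (n + 1) → ℕ) : ℂ :=
  (∏ i, Q ^ (s i ^ 2)) * (∏ i : Fin n, invQPoch Q (s i.castSucc - s i.succ)) * β (s (Fin.last n))

section BaileyChain

variable {Q : ℂ} {α : ℤ → ℂ} {β : ℕ → ℂ}

lemma baileyChainTerm_snoc (Q : ℂ) (β : ℕ → ℂ) {n : ℕ} (s : Fin (n + 1) → ℕ) (m : ℕ) :
    baileyChainTerm Q β (Fin.snoc s m : Fin (n + 2) → ℕ) =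
      baileyChainTerm Q (fun L ↦ invQPoch Q (L - m) * (Q ^ (m ^ 2) * β m)) s := by
  have h_prod : ∏ i : Fin (n + 1), invQPoch Q ((Fin.snoc s m : Fin (n + 2) → ℕ) i.castSucc -
        (Fin.snoc s m : Fin (n + 2) → ℕ) i.succ) =
      (∏ i : Fin n, invQPoch Q (s i.castSucc - s i.succ)) * invQPoch Q (s (Fin.last n) - m) := by
    simp only [Fin.prod_univ_castSucc, ← Fin.castSucc_succ, Fin.succ_last, Fin.snoc_castSucc,
      Fin.snoc_last]
  rw [baileyChainTerm, h_prod, Fin.prod_univ_castSucc]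
  simp only [Fin.snoc_castSucc, Fin.snoc_last, baileyChainTerm]
  ring

lemma summable_prod_apply {ι : Type*} {f : ι → ℝ} (hf₀ : 0 ≤ f) (hf : Summable f) (n : ℕ) :
    Summable fun s : Fin n → ι ↦ ∏ i, f (s i) := by
  induction n with
  | zero => exact .of_finite
  | succ n ih =>
    rw [← (Fin.consEquiv fun _ ↦ ι).summable_iff]
    refine (hf.mul_of_nonneg ih hf₀ fun s ↦ prod_nonneg fun i _ ↦ hf₀ (s i)).congr fun s ↦ ?_
    simp [Fin.consEquiv, Fin.prod_univ_succ]

lemma summable_baileyChainTerm (hQ : ‖Q‖ < 1) {D : ℝ} (hβ : ∀ L, ‖β L‖ ≤ D) (n : ℕ) :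
    Summable fun s : Fin (n + 1) → ℕ ↦ baileyChainTerm Q β s := by
  obtain ⟨C, hC⟩ := exists_norm_invQPoch_le hQ
  have h_gauss := summable_prod_apply (fun s ↦ by positivity) (summable_pow_sq (norm_nonneg Q) hQ)
    (n + 1)
  refine ((h_gauss.mul_right (C ^ n)).mul_right D).of_norm_bounded fun s ↦ ?_
  have h_inv : ∏ i : Fin n, ‖invQPoch Q (s i.castSucc - s i.succ)‖ ≤ C ^ n :=
    (prod_le_prod (fun _ _ ↦ norm_nonneg _) fun _ _ ↦ hC _).trans_eq (by
      rw [prod_const, card_univ, Fintype.card_fin])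
  have hC₀ : 0 ≤ C := (norm_nonneg _).trans (hC 0)
  simp only [baileyChainTerm, norm_mul, norm_prod, norm_pow]
  gcongr
  exact hβ _

theorem IsBaileyPair.tsum_baileyChainTerm (hQ₀ : Q ≠ 0) (hQ : ‖Q‖ < 1) (h : IsBaileyPair Q α β)
    (hα : Summable α) (n : ℕ) :
    ∑' s : Fin (n + 1) → ℕ, baileyChainTerm Q β s =
      (∑' r : ℤ, (Q ^ (n + 1)) ^ (r ^ 2) * α r) / qPochInf Q Q := by
  induction n generalizing α β with
  | zero =>
    rw [← (Equiv.funUnique (Fin 1) ℕ).symm.tsum_eq]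
    simpa [baileyChainTerm] using h.tsum_pow_sq_mul hQ₀ hQ hα
  | succ n ih =>
    have h_step := h.step hQ₀ (not_isOfFinOrder_of_norm_lt_one hQ)
    obtain ⟨D, hD⟩ := h.exists_norm_le hQ hα
    let e := (Equiv.prodComm _ _).trans (Fin.snocEquiv fun _ : Fin (n + 2) ↦ ℕ)
    have h_summable := e.summable_iff.mpr (summable_baileyChainTerm hQ hD (n + 1))
    rw [← e.tsum_eq]
    refine h_summable.tsum_prod.trans ?_
    calc
      _ = ∑' (s : Fin (n + 1) → ℕ), baileyChainTerm Q (baileyStep Q β) s := by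
        refine tsum_congr fun s ↦ ?_
        rw [baileyChainTerm, baileyStep, ← tsum_mul_left]
        exact tsum_congr fun m ↦ baileyChainTerm_snoc Q β s m
      _ = (∑' r : ℤ, (Q ^ (n + 1)) ^ (r ^ 2) * (Q ^ (r ^ 2) * α r)) / qPochInf Q Q :=
        ih h_step (summable_zpow_sq_mul hQ hα)
      _ = _ := by simp only [pow_succ Q (n + 1), mul_zpow, mul_assoc]

lemma baileyChainTerm_eq_zero_of_not_antitone (Q : ℂ) (β : ℕ → ℂ) {n : ℕ} {s : Fin (n + 1) → ℕ}
    (hs : ¬Antitone s) : baileyChainTerm Q β s = 0 := by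
  rw [Fin.antitone_iff_succ_le, not_forall] at hs
  obtain ⟨i, hi⟩ := hs
  rw [baileyChainTerm, prod_eq_zero (mem_univ i) (invQPoch_of_neg Q (by omega)), mul_zero, zero_mul]

lemma baileyChainTerm_of_antitone (Q : ℂ) (β : ℕ → ℂ) {n : ℕ} {s : Fin (n + 1) → ℕ}
    (hs : Antitone s) {t : ℕ → ℕ} (ht : ∀ i : Fin (n + 1), t i = s i) :
    baileyChainTerm Q β s = Q ^ (∑ m ∈ range (n + 1), t m ^ 2) /
      (∏ m ∈ range n, qPoch Q Q (t m - t (m + 1))) * β (t n) := by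
  have h_inv (i : Fin n) :
      invQPoch Q (s i.castSucc - s i.succ) = (qPoch Q Q (t i - t (i + 1)))⁻¹ := by
    have h_castSucc : t i = s i.castSucc := ht i.castSucc
    have h_succ : t (i + 1) = s i.succ := ht i.succ
    rw [h_castSucc, h_succ, ← invQPoch_natCast, Nat.cast_sub (hs i.castSucc_le_succ)]
  have h_last : t n = s (Fin.last n) := ht (Fin.last n)
  simp only [baileyChainTerm, h_inv, h_last, sum_range, prod_range, ht, prod_pow_eq_pow_sum,
    prod_inv_distrib, div_eq_mul_inv]

lemma tsum_antitone_baileyChainTerm (Q : ℂ) (β : ℕ → ℂ) (n : ℕ) :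
    ∑' s : {s : Fin (n + 1) → ℕ // Antitone s}, baileyChainTerm Q β s.1 =
      ∑' s : Fin (n + 1) → ℕ, baileyChainTerm Q β s :=
  tsum_subtype_eq_of_support_subset (s := {s | Antitone s}) fun _ hs ↦
    not_not.mp (mt (baileyChainTerm_eq_zero_of_not_antitone Q β) hs)

end BaileyChain

theorem tsum_baileyChainTerm_inv_qPoch_two_mul {q : ℂ} (hq₀ : q ≠ 0) (hq : ‖q‖ < 1) (n : ℕ) :
    ∑' s : Fin (n + 1) → ℕ, baileyChainTerm (q ^ 2) (fun L ↦ (qPoch q q (2 * L))⁻¹) s =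
      qPochInf (q ^ (4 * (n + 2))) (q ^ (4 * (n + 2))) *
        qPochInf (-(q ^ (2 * (n + 2) - 1))) (q ^ (4 * (n + 2))) *
        qPochInf (-(q ^ (2 * (n + 2) + 1))) (q ^ (4 * (n + 2))) / qPochInf (q ^ 2) (q ^ 2) := by
  have h_pow {m : ℕ} (hm : m ≠ 0) : ‖q ^ m‖ < 1 := by
    simpa only [norm_pow] using pow_lt_one₀ (norm_nonneg q) hq hm
  have hQ₀ : q ^ 2 ≠ 0 := pow_ne_zero 2 hq₀
  have h_exp (r : ℤ) : ((q ^ 2) ^ (n + 1)) ^ (r ^ 2) * ((q ^ 2) ^ (r ^ 2) * q⁻¹ ^ r) =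
      (q ^ (2 * (n + 2))) ^ (r ^ 2) * q⁻¹ ^ r := by
    rw [← mul_assoc, ← mul_zpow, ← pow_succ, ← pow_mul]
  rw [(isBaileyPair_zpow_sq_mul_inv_zpow hq₀
      (not_isOfFinOrder_of_norm_lt_one hq)).tsum_baileyChainTerm hQ₀ (h_pow two_ne_zero)
      (summable_zpow_sq_mul_zpow hQ₀ (h_pow two_ne_zero) (inv_ne_zero hq₀)),
    tsum_congr h_exp,
    jacobi_triple_product (pow_ne_zero _ hq₀) (h_pow (by omega)) (inv_ne_zero hq₀), inv_inv,
    ← pow_succ, ← pow_mul, show 2 * (n + 2) * 2 = 4 * (n + 2) by ring,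
    ← pow_sub_one_mul (show 2 * (n + 2) ≠ 0 by omega) q, mul_inv_cancel_right₀ hq₀]

/-- Identity (4.1) (with `q` replaced by `q²`).  The tuple `s` encodes
`s_1 ≥ s_2 ≥ ⋯ ≥ s_{k-1} ≥ 0` via `s_m = t (m-1)`. -/
theorem identity_4_1 (q : ℂ) (h0 : 0 < ‖q‖) (h1 : ‖q‖ < 1)
    (k : ℕ) (hk : 2 ≤ k) :
    (∑' s : {s : Fin (k - 1) → ℕ // Antitone s},
      (let t : ℕ → ℕ := fun m => if h : m < k - 1 then s.1 ⟨m, h⟩ else 0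
       q ^ (2 * ∑ m ∈ Finset.range (k - 1), (t m) ^ 2) /
         ((∏ m ∈ Finset.range (k - 2), qPoch (q ^ 2) (q ^ 2) (t m - t (m + 1))) *
           qPoch q q (2 * t (k - 2))))) =
      qPochInf (q ^ (4 * k)) (q ^ (4 * k)) * qPochInf (-(q ^ (2 * k - 1))) (q ^ (4 * k)) *
        qPochInf (-(q ^ (2 * k + 1))) (q ^ (4 * k)) / qPochInf (q ^ 2) (q ^ 2) := by
  obtain ⟨n, rfl⟩ : ∃ n, k = n + 2 := ⟨k - 2, by omega⟩
  rw [← tsum_baileyChainTerm_inv_qPoch_two_mul (norm_pos_iff.mp h0) h1,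
    ← tsum_antitone_baileyChainTerm]
  refine tsum_congr fun s ↦ ?_
  let t (m : ℕ) : ℕ := if h : m < n + 1 then s.1 ⟨m, h⟩ else 0
  rw [baileyChainTerm_of_antitone _ _ s.2 (t := t) fun i ↦ dif_pos i.isLt, ← pow_mul,
    ← div_eq_mul_inv, div_div]
  rfl
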